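/- Every eigenvalue of the nonuniform second-difference matrix P is real and nonpositive. -/

import Mathlib

open Matrix Finset

/-- Spectral (operator 2-) norm of a real square matrix. -/
noncomputable def specNorm {N : ℕ} (A : Matrix (Fin N) (Fin N) ℝ) : ℝ :=
  ‖Matrix.toEuclideanCLM (𝕜 := ℝ) A‖

/-- The nonuniform second-difference (tridiagonal) matrix on a grid with step sizes `h`. -/
noncomputable def Pmat (N : ℕ) (h : Fin (N + 1) → ℝ) : Matrix (Fin N) (Fin N) ℝ :=
  Matrix.of fun i j =>
    if (i : ℕ) = (j : ℕ) then -2 / (h i.castSucc * h i.succ)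
    else if (i : ℕ) + 1 = (j : ℕ) then 2 / (h i.succ * (h i.castSucc + h i.succ))
    else if (j : ℕ) + 1 = (i : ℕ) then 2 / (h i.castSucc * (h i.castSucc + h i.succ))
    else 0

theorem Pmat_weight_symm {N : ℕ} (h : Fin (N + 1) → ℝ) (hpos : ∀ i, 0 < h i) (i j : Fin N) :
    (h i.castSucc + h i.succ) * Pmat N h i j = (h j.castSucc + h j.succ) * Pmat N h j i := by
  have upper : ∀ i j : Fin N, (i : ℕ) + 1 = j →
      (h i.castSucc + h i.succ) * Pmat N h i j = (h j.castSucc + h j.succ) * Pmat N h j i := by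
    intro i j hij
    have hs : j.castSucc = i.succ := by ext; simp [← hij]
    have h1 := hpos i.castSucc
    have h2 := hpos i.succ
    have h3 := hpos j.succ
    simp only [Pmat, Matrix.of_apply, hs]
    rw [if_neg (by lia), if_pos hij, if_neg (by lia), if_neg (by lia), if_pos hij]
    field_simp
  by_cases h1 : (i : ℕ) + 1 = j
  · exact upper i j h1
  by_cases h2 : (j : ℕ) + 1 = i
  · exact (upper j i h2).symm
  by_cases h3 : i = j
  · rw [h3]
  have h4 : (i : ℕ) ≠ j := fun h => h3 (Fin.ext h)
  simp [Pmat, h1, h2, h4, h4.symm]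

theorem Pmat_offDiag_abs_sum_le {N : ℕ} (h : Fin (N + 1) → ℝ) (hpos : ∀ i, 0 < h i) (k : Fin N) :
    ∑ j ∈ univ.erase k, |Pmat N h k j| ≤ -Pmat N h k k := by
  set a := h k.castSucc
  set b := h k.succ
  have ha : 0 < a := hpos _
  have hb : 0 < b := hpos _
  have sum_ite_le : ∀ (p : Fin N → Prop) [DecidablePred p] (c : ℝ), 0 ≤ c →
      (∀ i j, p i → p j → i = j) → ∑ j, (if p j then c else 0) ≤ c := by
    intro p _ c hc hp
    rw [← Finset.sum_filter, Finset.sum_const, nsmul_eq_mul]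
    have : #{j | p j} ≤ 1 := Finset.card_le_one.2 (by simpa using fun i hi j hj => hp i j hi hj)
    exact mul_le_of_le_one_left hc (by exact_mod_cast this)
  calc ∑ j ∈ univ.erase k, |Pmat N h k j|
      ≤ ∑ j ∈ univ.erase k, ((if (k : ℕ) + 1 = (j : ℕ) then 2 / (b * (a + b)) else 0) +
          (if (j : ℕ) + 1 = (k : ℕ) then 2 / (a * (a + b)) else 0)) := by
        refine Finset.sum_le_sum fun j hj => ?_
        have hkj : (k : ℕ) ≠ j := fun e => (Finset.ne_of_mem_erase hj) (Fin.ext e.symm)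
        simp only [Pmat, Matrix.of_apply, if_neg hkj]
        split_ifs
        · lia
        · rw [abs_of_nonneg (by positivity), add_zero]
        · rw [abs_of_nonneg (by positivity), zero_add]
        · simp
    _ ≤ ∑ j : Fin N, ((if (k : ℕ) + 1 = (j : ℕ) then 2 / (b * (a + b)) else 0) +
          (if (j : ℕ) + 1 = (k : ℕ) then 2 / (a * (a + b)) else 0)) := by
        refine Finset.sum_le_sum_of_subset_of_nonneg (Finset.erase_subset _ _) fun _ _ _ => ?_
        positivity
    _ ≤ 2 / (b * (a + b)) + 2 / (a * (a + b)) := by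
        rw [Finset.sum_add_distrib]
        gcongr <;> exact sum_ite_le _ _ (by positivity) fun i j hi hj => Fin.ext (by lia)
    _ = -Pmat N h k k := by
        simp only [Pmat, Matrix.of_apply, if_true]
        change _ = -(-2 / (a * b))
        field_simp

/-- An eigenvalue of a real matrix that is symmetric with respect to positive weights is real. -/
theorem im_eq_zero_of_mulVec_eq_smul_of_weight_symm {n : Type*} [Fintype n] {A : Matrix n n ℝ}
    {w : n → ℝ} (hw : ∀ i, 0 < w i) (hA : ∀ i j, w i * A i j = w j * A j i) {μ : ℂ} {v : n → ℂ}
    (hv : v ≠ 0) (heig : (A.map Complex.ofReal).mulVec v = μ • v) : μ.im = 0 := by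
  let S : Matrix n n ℂ := Matrix.of fun i j => ((w i * A i j : ℝ) : ℂ)
  have hS : S.IsHermitian := by
    ext i j
    simp only [S, Matrix.conjTranspose_apply, Matrix.of_apply, hA i j]
    exact Complex.conj_ofReal _
  have hSv : star v ⬝ᵥ S *ᵥ v = μ * ((∑ i, w i * Complex.normSq (v i) : ℝ) : ℂ) := by
    have hrow : ∀ i, (S *ᵥ v) i = w i * (μ * v i) := by
      intro i
      have := congrFun heig i
      simp only [Pi.smul_apply, smul_eq_mul] at this
      rw [← this]
      simp [S, Matrix.mulVec, dotProduct, Finset.mul_sum, mul_assoc]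
    simp only [dotProduct, hrow, Pi.star_apply]
    push_cast
    rw [Finset.mul_sum]
    refine Finset.sum_congr rfl fun i _ => ?_
    rw [Complex.normSq_eq_conj_mul_self, ← starRingEnd_apply]
    ring
  have hsum : 0 < ∑ i, w i * Complex.normSq (v i) := by
    obtain ⟨i, hi⟩ := Function.ne_iff.1 hv
    exact Finset.sum_pos' (fun j _ => mul_nonneg (hw j).le (Complex.normSq_nonneg _))
      ⟨i, Finset.mem_univ i, mul_pos (hw i) (Complex.normSq_pos.2 hi)⟩
  have him := hS.im_star_dotProduct_mulVec_self v
  rw [hSv] at him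
  simpa [hsum.ne'] using him

theorem P_eigenvalues_real_nonpos (N : ℕ) (h : Fin (N + 1) → ℝ)
    (hpos : ∀ i, 0 < h i) (μ : ℂ) (v : Fin N → ℂ) (hv : v ≠ 0)
    (heig : ((Pmat N h).map Complex.ofReal).mulVec v = μ • v) :
    μ.im = 0 ∧ μ.re ≤ 0 := by
  refine ⟨im_eq_zero_of_mulVec_eq_smul_of_weight_symm
    (fun i => add_pos (hpos i.castSucc) (hpos i.succ)) (Pmat_weight_symm h hpos) hv heig, ?_⟩
  have hev : Module.End.HasEigenvalue (Matrix.toLin' ((Pmat N h).map Complex.ofReal)) μ :=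
    Module.End.hasEigenvalue_of_hasEigenvector (x := v)
      ⟨Module.End.mem_eigenspace_iff.2 (by simpa using heig), hv⟩
  obtain ⟨k, hk⟩ := eigenvalue_mem_ball hev
  have hle := Pmat_offDiag_abs_sum_le h hpos k
  simp only [mem_closedBall_iff_norm, Matrix.map_apply, Complex.norm_real, Real.norm_eq_abs] at hk
  have hre := (Complex.re_le_norm _).trans hk
  simp only [Complex.sub_re, Complex.ofReal_re] at hre
  linarith
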